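/- Let v ∈ ℝ^K be unimodal with peak p, and let ṽ satisfy ‖ṽ − v‖_∞ ≤ ε. Define w by w_k = max_{i ≤ k} ṽ_i for k ≤ p̃ and w_k = max_{i ≥ k} ṽ_i for k ≥ p̃, where p̃ = argmax_k ṽ_k. Then w is unimodal and ‖w − ṽ‖_∞ ≤ 2ε. -/

import Mathlib

/-- A vector `v` is unimodal with peak `p`. -/
def Unimodal {K : ℕ} (v : Fin K → ℝ) (p : Fin K) : Prop :=
  (∀ i j : Fin K, i ≤ j → j ≤ p → v i ≤ v j) ∧
  (∀ i j : Fin K, p ≤ i → i ≤ j → v j ≤ v i)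

/-!
A unimodal vector satisfies `min (v i) (v l) ≤ v j` for `i ≤ j ≤ l`, and a perturbation of size
`ε` destroys this by at most `2ε`. If `p` maximizes the perturbed vector and `i ≤ k ≤ p`, taking
`l = p` makes the minimum equal to the value at `i`. So no value left of `k` exceeds the value at
`k` by more than `2ε`, and neither does the running maximum; the right-hand side is symmetric.
-/

section Unimodality

variable {ι α : Type*} [LinearOrder ι]

/-- Unimodality with peak `p` for functions from a linear order to a preorder, extending
`Unimodal` beyond `Fin K → ℝ`. -/
structure IsUnimodalAt [Preorder α] (v : ι → α) (p : ι) : Prop where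
  monotoneOn : MonotoneOn v (Set.Iic p)
  antitoneOn : AntitoneOn v (Set.Ici p)

/-- `δ`-approximate unimodality, which mentions no peak. Allowing `i = j = l` forces `0 ≤ δ`
in an ordered group as soon as `ι` is nonempty. -/
def IsApproxUnimodal [LinearOrder α] [Add α] (δ : α) (v : ι → α) : Prop :=
  ∀ ⦃i j l⦄, i ≤ j → j ≤ l → min (v i) (v l) ≤ v j + δ

theorem unimodal_iff_isUnimodalAt {K : ℕ} {v : Fin K → ℝ} {p : Fin K} :
    Unimodal v p ↔ IsUnimodalAt v p :=
  ⟨fun h ↦ ⟨fun i _ j hj hij ↦ h.1 i j hij hj, fun i hi j _ hij ↦ h.2 i j hi hij⟩,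
    fun h ↦ ⟨fun _ _ hij hj ↦ h.monotoneOn (hij.trans hj) hj hij,
      fun _ _ hi hij ↦ h.antitoneOn hi (hi.trans hij) hij⟩⟩

theorem IsUnimodalAt.min_le [LinearOrder α] {v : ι → α} {p i j l : ι} (h : IsUnimodalAt v p)
    (hij : i ≤ j) (hjl : j ≤ l) : min (v i) (v l) ≤ v j := by
  rcases le_total j p with hjp | hpj
  · exact min_le_of_left_le (h.monotoneOn (hij.trans hjp) hjp hij)
  · exact min_le_of_right_le (h.antitoneOn hpj (hpj.trans hjl) hjl)

theorem IsUnimodalAt.isApproxUnimodal_zero [LinearOrder α] [AddZeroClass α] {v : ι → α} {p : ι}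
    (h : IsUnimodalAt v p) : IsApproxUnimodal 0 v :=
  fun _ _ _ hij hjl ↦ (h.min_le hij hjl).trans_eq (add_zero _).symm

theorem IsApproxUnimodal.of_abs_sub_le [AddCommGroup α] [LinearOrder α] [IsOrderedAddMonoid α]
    {u v : ι → α} {δ ε : α} (hu : IsApproxUnimodal δ u) (huv : ∀ k, |v k - u k| ≤ ε) :
    IsApproxUnimodal (δ + 2 • ε) v := by
  intro i j l hij hjl
  have v_le (k : ι) : v k ≤ u k + ε := sub_le_iff_le_add'.mp (abs_sub_le_iff.mp (huv k)).1
  have u_le (k : ι) : u k ≤ v k + ε := sub_le_iff_le_add'.mp (abs_sub_le_iff.mp (huv k)).2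
  calc min (v i) (v l) ≤ min (u i + ε) (u l + ε) := min_le_min (v_le i) (v_le l)
    _ = min (u i) (u l) + ε := min_add_add_right _ _ _
    _ ≤ u j + δ + ε := by gcongr; exact hu hij hjl
    _ ≤ v j + ε + δ + ε := by gcongr; exact u_le j
    _ = v j + (δ + 2 • ε) := by abel

end Unimodality

section Rounding

variable {ι α : Type*} [LinearOrder ι] [LocallyFiniteOrderBot ι] [LocallyFiniteOrderTop ι]
  [LinearOrder α] {v : ι → α} {p k : ι}

/-- The rounding of `v` at `p`: the maximum of `v` over the indices on the far side of `k` from `p`.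
At `k = p` the indices below `p` are used; when `p` maximizes `v` the other side gives the same
value, see `unimodalRounding_of_ge`. -/
def unimodalRounding (v : ι → α) (p k : ι) : α :=
  if k ≤ p then (Finset.Iic k).sup' Finset.nonempty_Iic v
  else (Finset.Ici k).sup' Finset.nonempty_Ici v

theorem unimodalRounding_of_le (hk : k ≤ p) :
    unimodalRounding v p k = (Finset.Iic k).sup' Finset.nonempty_Iic v :=
  if_pos hk

theorem unimodalRounding_of_ge (hp : ∀ i, v i ≤ v p) (hk : p ≤ k) :
    unimodalRounding v p k = (Finset.Ici k).sup' Finset.nonempty_Ici v := by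
  rcases hk.eq_or_lt with rfl | hpk
  · have sup'_eq {s : Finset ι} (hs : p ∈ s) : s.sup' ⟨p, hs⟩ v = v p :=
      le_antisymm (Finset.sup'_le _ _ fun i _ ↦ hp i) (Finset.le_sup' v hs)
    rw [unimodalRounding_of_le le_rfl, sup'_eq (Finset.mem_Iic.mpr le_rfl),
      sup'_eq (Finset.mem_Ici.mpr le_rfl)]
  · exact if_neg hpk.not_ge

theorem isUnimodalAt_unimodalRounding (hp : ∀ i, v i ≤ v p) :
    IsUnimodalAt (unimodalRounding v p) p where
  monotoneOn i hi j hj hij := by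
    rw [unimodalRounding_of_le hi, unimodalRounding_of_le hj]
    exact Finset.sup'_mono v (Finset.Iic_subset_Iic.mpr hij) _
  antitoneOn i hi j hj hij := by
    rw [unimodalRounding_of_ge hp hi, unimodalRounding_of_ge hp hj]
    exact Finset.sup'_mono v (Finset.Ici_subset_Ici.mpr hij) _

theorem le_unimodalRounding (v : ι → α) (p k : ι) : v k ≤ unimodalRounding v p k := by
  unfold unimodalRounding
  split_ifs
  · exact Finset.le_sup' v (Finset.mem_Iic.mpr le_rfl)
  · exact Finset.le_sup' v (Finset.mem_Ici.mpr le_rfl)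

theorem IsApproxUnimodal.unimodalRounding_le_add [Add α] {δ : α} (hv : IsApproxUnimodal δ v)
    (hp : ∀ i, v i ≤ v p) (k : ι) : unimodalRounding v p k ≤ v k + δ := by
  rcases le_total k p with hkp | hpk
  · rw [unimodalRounding_of_le hkp]
    refine Finset.sup'_le _ _ fun i hi ↦ ?_
    calc v i = min (v i) (v p) := (min_eq_left (hp i)).symm
      _ ≤ v k + δ := hv (Finset.mem_Iic.mp hi) hkp
  · rw [unimodalRounding_of_ge hp hpk]
    refine Finset.sup'_le _ _ fun i hi ↦ ?_
    calc v i = min (v p) (v i) := (min_eq_right (hp i)).symm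
      _ ≤ v k + δ := hv hpk (Finset.mem_Ici.mp hi)

theorem IsApproxUnimodal.abs_unimodalRounding_sub_le [AddCommGroup α] [IsOrderedAddMonoid α]
    {δ : α} (hv : IsApproxUnimodal δ v) (hp : ∀ i, v i ≤ v p) (k : ι) :
    |unimodalRounding v p k - v k| ≤ δ := by
  rw [abs_of_nonneg (sub_nonneg.mpr (le_unimodalRounding v p k)), sub_le_iff_le_add']
  exact hv.unimodalRounding_le_add hp k

theorem rounding_unimodal_general [AddCommGroup α] [IsOrderedAddMonoid α] {u : ι → α} {δ ε : α}
    (hu : IsApproxUnimodal δ u) (huv : ∀ k, |v k - u k| ≤ ε) (hp : ∀ i, v i ≤ v p) :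
    IsUnimodalAt (unimodalRounding v p) p ∧
      ∀ k, |unimodalRounding v p k - v k| ≤ δ + 2 • ε :=
  ⟨isUnimodalAt_unimodalRounding hp, (hu.of_abs_sub_le huv).abs_unimodalRounding_sub_le hp⟩

end Rounding

/-- let `v` be unimodal with peak `p` and `vt` entrywise within
`ε` of `v`; let `pt` be a maximizer of `vt` and define
`w k = max_{i ≤ k} vt i` for `k ≤ pt` and `w k = max_{i ≥ k} vt i` for
`k > pt`. Then `w` is unimodal (with peak `pt`) and `‖w - vt‖_∞ ≤ 2ε`. -/
theorem rounding_unimodal {K : ℕ} (v vt : Fin K → ℝ) (p pt : Fin K) (ε : ℝ)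
    (hv : Unimodal v p)
    (hdist : ∀ k, |vt k - v k| ≤ ε)
    (hpt : ∀ k, vt k ≤ vt pt)
    (w : Fin K → ℝ)
    (hw : ∀ k, w k = if k ≤ pt then (Finset.Iic k).sup' Finset.nonempty_Iic vt
                     else (Finset.Ici k).sup' Finset.nonempty_Ici vt) :
    Unimodal w pt ∧ ∀ k, |w k - vt k| ≤ 2 * ε := by
  obtain rfl : w = unimodalRounding vt pt := funext hw
  simpa [unimodal_iff_isUnimodalAt] using
    rounding_unimodal_general (unimodal_iff_isUnimodalAt.mp hv).isApproxUnimodal_zero hdist hpt
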